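/- arXiv:1602.07795 — 2 statements merged into one kernel-verified Lean document; each statement's English description precedes it below -/
import Mathlib

section
/- Let f : ℝ^N → ℝ be twice continuously differentiable with c·I ⪯ ∇²f(x) ⪯ C·I for all x, where 0 < c ≤ C. Fix γ ∈ ℝ^N with γ > 0 componentwise and Γ := Diag(γ). Let g(r) be the unique minimizer of f(x) + ½‖x − r‖²_γ, and define Q̃(r) := [∂g(r)/∂r] Γ⁻¹ = (∇²f(g(r)) + Γ)⁻¹. Then Q̃(r) is symmetric positive definite and satisfies the two-sided Loewner bounds c·I + Γ ⪯ Q̃(r)⁻¹ ⪯ C·I + Γ for all r; equivalently (C·I + Γ)⁻¹ ⪯ Q̃(r) ⪯ (c·I + Γ)⁻¹. -/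
/-!
Stationarity of the minimizer `g r` reads `F (g r) = r`, where
`F x = x + Γ⁻¹ ∇f(x)` (`gradMap`), so `g` is a right inverse of the `C¹` map `F`, whose derivative
at `x` is `Γ⁻¹ (∇²f(x) + Γ)` and is invertible. Since `∇²f ⪰ 0`, the gradient of `f` is
monotone, which makes `g` nonexpansive for `‖·‖_γ` (`sum_sq_le`), hence continuous. A continuous
right inverse of a map with invertible derivative is differentiable, with the inverse derivative
`(∇²f(g r) + Γ)⁻¹ Γ`. The Loewner bounds are then the ones assumed on `∇²f(g r)`, shifted by `Γ`.
-/

open Matrix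

/-- The Hessian matrix of `f : ℝ^N → ℝ` at `x`, with entries `∂²f/∂xᵢ∂xⱼ`. -/
noncomputable def hessianMatrix {N : ℕ} (f : (Fin N → ℝ) → ℝ) (x : Fin N → ℝ) :
    Matrix (Fin N) (Fin N) ℝ :=
  Matrix.of fun i j => fderiv ℝ (fun y => fderiv ℝ f y (Pi.single j 1)) x (Pi.single i 1)

/-- The Jacobian matrix of `g : ℝ^N → ℝ^N` at `r`, with entries `∂gᵢ/∂rⱼ`. -/
noncomputable def jacobianMatrix {N : ℕ} (g : (Fin N → ℝ) → (Fin N → ℝ)) (r : Fin N → ℝ) :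
    Matrix (Fin N) (Fin N) ℝ :=
  Matrix.of fun i j => fderiv ℝ (fun s => g s i) r (Pi.single j 1)

/-- The map `x ↦ x + Γ⁻¹ ∇f(x)`, of which the proximal function of `f` is an inverse. -/
noncomputable def gradMap {N : ℕ} (f : (Fin N → ℝ) → ℝ) (γ : Fin N → ℝ) (x : Fin N → ℝ) :
    Fin N → ℝ :=
  fun i => x i + (γ i)⁻¹ * fderiv ℝ f x (Pi.single i 1)

lemma differentiable_fderiv {N : ℕ} {f : (Fin N → ℝ) → ℝ} (hf : ContDiff ℝ 2 f) :
    Differentiable ℝ (fderiv ℝ f) :=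
  (hf.fderiv_right (m := 1) (by norm_num)).differentiable (by norm_num)

lemma clm_apply_eq_sum {N : ℕ} {F : Type*} [NormedAddCommGroup F] [NormedSpace ℝ F]
    (L : (Fin N → ℝ) →L[ℝ] F) (v : Fin N → ℝ) :
    L v = ∑ i, v i • L (Pi.single i 1) := by
  conv_lhs => rw [pi_eq_sum_univ' v]
  rw [map_sum]
  refine Finset.sum_congr rfl fun i _ => ?_
  rw [map_smul]

lemma hessianMatrix_apply {N : ℕ} {f : (Fin N → ℝ) → ℝ} (hf : ContDiff ℝ 2 f)
    (x : Fin N → ℝ) (i j : Fin N) :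
    hessianMatrix f x i j = fderiv ℝ (fderiv ℝ f) x (Pi.single i 1) (Pi.single j 1) := by
  have h := ((differentiable_fderiv hf x).hasFDerivAt.clm_apply
    (hasFDerivAt_const (Pi.single j (1 : ℝ)) x)).fderiv
  simp [hessianMatrix, h]

lemma fderiv_fderiv_apply {N : ℕ} {f : (Fin N → ℝ) → ℝ} (hf : ContDiff ℝ 2 f)
    (x u v : Fin N → ℝ) :
    fderiv ℝ (fderiv ℝ f) x u v = u ⬝ᵥ hessianMatrix f x *ᵥ v := by
  rw [clm_apply_eq_sum (fderiv ℝ (fderiv ℝ f) x) u, _root_.sum_apply]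
  simp only [dotProduct, mulVec, hessianMatrix_apply hf, _root_.smul_apply,
    smul_eq_mul]
  refine Finset.sum_congr rfl fun i _ => ?_
  rw [clm_apply_eq_sum _ v]
  simp [mul_comm]

/-- A `C²` function with positive semidefinite Hessian has a monotone gradient: the directional
derivative along `x - y` is nondecreasing on the line through `y` and `x`. -/
lemma fderiv_monotone {N : ℕ} {f : (Fin N → ℝ) → ℝ} (hf : ContDiff ℝ 2 f)
    (hpos : ∀ x, (hessianMatrix f x).PosSemidef) (x y : Fin N → ℝ) :
    fderiv ℝ f y (x - y) ≤ fderiv ℝ f x (x - y) := by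
  have hd : ∀ t : ℝ, HasDerivAt (fun t : ℝ => fderiv ℝ f (y + t • (x - y)) (x - y))
      (fderiv ℝ (fderiv ℝ f) (y + t • (x - y)) (x - y) (x - y)) t := by
    intro t
    have hl : HasDerivAt (fun t : ℝ => y + t • (x - y)) (x - y) t := by
      simpa using ((hasDerivAt_id t).smul_const (x - y)).const_add y
    have h := (differentiable_fderiv hf (y + t • (x - y))).hasFDerivAt.comp_hasDerivAt t hl
    simpa using h.clm_apply (hasDerivAt_const t (x - y))
  have hm : Monotone (fun t : ℝ => fderiv ℝ f (y + t • (x - y)) (x - y)) := by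
    refine monotone_of_deriv_nonneg (fun t => (hd t).differentiableAt) fun t => ?_
    rw [(hd t).deriv, fderiv_fderiv_apply hf]
    simpa using (hpos (y + t • (x - y))).dotProduct_mulVec_nonneg (x - y)
  simpa using hm zero_le_one

lemma gradMap_of_isMin {N : ℕ} {f : (Fin N → ℝ) → ℝ} (hf : Differentiable ℝ f)
    {γ : Fin N → ℝ} (hγ : ∀ n, 0 < γ n) {p r : Fin N → ℝ}
    (hp : ∀ x, f p + (1/2) * ∑ n, γ n * (p n - r n)^2 ≤
      f x + (1/2) * ∑ n, γ n * (x n - r n)^2) :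
    gradMap f γ p = r := by
  have hs : HasFDerivAt (fun x : Fin N → ℝ => ∑ n, γ n * (x n - r n)^2) _ p :=
    HasFDerivAt.fun_sum fun n _ =>
      (((hasFDerivAt_apply (𝕜 := ℝ) n p).sub_const (r n)).pow 2).const_mul (γ n)
  have h := (hf p).hasFDerivAt.add (hs.const_mul (1/2))
  have h0 := IsLocalMin.hasFDerivAt_eq_zero (Filter.Eventually.of_forall hp) h
  ext i
  have h1 := congrArg (fun L => L (Pi.single i (1 : ℝ))) h0
  simp [Pi.single_apply] at h1
  have := (hγ i).ne'
  simp only [gradMap]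
  field_simp
  linarith

/-- `F = gradMap f γ` is expansive for `‖·‖_γ`, so its right inverses are nonexpansive: expanding
`‖F p - F q‖²_γ` gives `‖p - q‖²_γ + 2 ⟨∇f(p) - ∇f(q), p - q⟩` plus a sum of squares, and the
inner product is nonnegative because the gradient is monotone. -/
lemma sum_sq_le {N : ℕ} {f : (Fin N → ℝ) → ℝ} (hf : ContDiff ℝ 2 f)
    (hpos : ∀ x, (hessianMatrix f x).PosSemidef)
    {γ : Fin N → ℝ} (hγ : ∀ n, 0 < γ n) (p q : Fin N → ℝ) :
    ∑ n, γ n * (p n - q n)^2 ≤ ∑ n, γ n * (gradMap f γ p n - gradMap f γ q n)^2 := by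
  have hm := fderiv_monotone hf hpos p q
  rw [clm_apply_eq_sum, clm_apply_eq_sum (fderiv ℝ f p), ← sub_nonneg,
    ← Finset.sum_sub_distrib] at hm
  have key : ∑ n, γ n * (p n - q n)^2 + 2 * ∑ n, ((p - q) n • fderiv ℝ f p (Pi.single n 1) -
      (p - q) n • fderiv ℝ f q (Pi.single n 1)) ≤
      ∑ n, γ n * (gradMap f γ p n - gradMap f γ q n)^2 := by
    rw [Finset.mul_sum, ← Finset.sum_add_distrib]
    refine Finset.sum_le_sum fun n _ => ?_
    have h := hγ n
    have hne := h.ne'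
    rw [← sub_nonneg]
    -- The difference of the two sides is `γₙ⁻¹ (∂ₙf(p) - ∂ₙf(q))²`.
    have : γ n * (gradMap f γ p n - gradMap f γ q n)^2 - (γ n * (p n - q n)^2 +
        2 * ((p - q) n • fderiv ℝ f p (Pi.single n 1) -
          (p - q) n • fderiv ℝ f q (Pi.single n 1))) =
        (γ n)⁻¹ * (fderiv ℝ f p (Pi.single n 1) - fderiv ℝ f q (Pi.single n 1))^2 := by
      simp only [gradMap, Pi.sub_apply, smul_eq_mul]
      field_simp
      ring
    rw [this]
    positivity
  linarith

lemma continuous_of_gradMap_comp {N : ℕ} {f : (Fin N → ℝ) → ℝ} (hf : ContDiff ℝ 2 f)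
    (hpos : ∀ x, (hessianMatrix f x).PosSemidef)
    {γ : Fin N → ℝ} (hγ : ∀ n, 0 < γ n) {g : (Fin N → ℝ) → (Fin N → ℝ)}
    (hg : ∀ r, gradMap f γ (g r) = r) : Continuous g := by
  refine continuous_pi fun i => continuous_iff_continuousAt.2 fun r => ?_
  have hb : ∀ s, |g s i - g r i| ≤ √((γ i)⁻¹ * ∑ n, γ n * (s n - r n)^2) := by
    intro s
    have h := sum_sq_le hf hpos hγ (g s) (g r)
    rw [hg, hg] at h
    have h1 := Finset.single_le_sum (f := fun n => γ n * (g s n - g r n)^2)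
      (fun n _ => mul_nonneg (hγ n).le (sq_nonneg _)) (Finset.mem_univ i)
    apply Real.abs_le_sqrt
    rw [inv_mul_eq_div, le_div_iff₀ (hγ i)]
    linarith
  have hc : Continuous fun s : Fin N → ℝ => √((γ i)⁻¹ * ∑ n, γ n * (s n - r n)^2) := by
    fun_prop
  have ht := hc.tendsto r
  simp only [sub_self, ne_eq, OfNat.ofNat_ne_zero, not_false_eq_true, zero_pow, mul_zero,
    Finset.sum_const_zero, Real.sqrt_zero] at ht
  exact tendsto_iff_dist_tendsto_zero.2
    (squeeze_zero (fun _ => dist_nonneg) (fun s => by rw [Real.dist_eq]; exact hb s) ht)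

lemma hasFDerivAt_gradMap {N : ℕ} {f : (Fin N → ℝ) → ℝ} (hf : ContDiff ℝ 2 f)
    {γ : Fin N → ℝ} (hγ : ∀ n, 0 < γ n) (x : Fin N → ℝ)
    (hsymm : (hessianMatrix f x).IsSymm) :
    HasFDerivAt (gradMap f γ) (LinearMap.toContinuousLinearMap (Matrix.toLin'
      (diagonal (fun n => (γ n)⁻¹) * (hessianMatrix f x + diagonal γ)))) x := by
  rw [hasFDerivAt_pi']
  intro i
  have h := (hasFDerivAt_apply (𝕜 := ℝ) i x).add
    (((differentiable_fderiv hf x).hasFDerivAt.clm_apply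
      (hasFDerivAt_const (Pi.single i (1 : ℝ)) x)).const_mul (γ i)⁻¹)
  refine h.congr_fderiv ?_
  ext1 v
  have hne := (hγ i).ne'
  have hv : v ⬝ᵥ (hessianMatrix f x).col i = (hessianMatrix f x *ᵥ v) i := by
    rw [mulVec, dotProduct_comm]
    congr 1
    ext j
    exact hsymm.apply i j
  simp [mulVec_diagonal, fderiv_fderiv_apply hf, hv]
  field_simp
  ring

/-- **MAP part of Lemma 2 (verification of Assumption 1).**
Let `f : ℝ^N → ℝ` be `C²` with `c·I ⪯ ∇²f(x) ⪯ C·I` for all `x`, `0 < c ≤ C`,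
let `γ > 0` componentwise, `Γ = Diag γ`, and let `g(r)` be the unique
minimizer of `f(x) + ½‖x − r‖²_γ`.  Then the scaled Jacobian
`Q̃(r) := [∂g(r)/∂r] Γ⁻¹` equals `(∇²f(g(r)) + Γ)⁻¹`, is symmetric positive
definite, and satisfies `c·I + Γ ⪯ Q̃(r)⁻¹ ⪯ C·I + Γ`. -/
theorem map_scaled_jacobian_bounds
    (N : ℕ) (f : (Fin N → ℝ) → ℝ) (c C : ℝ)
    (hc : 0 < c) (hcC : c ≤ C)
    (hf : ContDiff ℝ 2 f)
    (hhess : ∀ x : Fin N → ℝ,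
      (hessianMatrix f x - c • (1 : Matrix (Fin N) (Fin N) ℝ)).PosSemidef ∧
      (C • (1 : Matrix (Fin N) (Fin N) ℝ) - hessianMatrix f x).PosSemidef)
    (γ : Fin N → ℝ) (hγ : ∀ n, 0 < γ n)
    (g : (Fin N → ℝ) → (Fin N → ℝ))
    (hg : ∀ r x, x ≠ g r →
      f (g r) + (1/2) * ∑ n, γ n * (g r n - r n)^2 <
      f x + (1/2) * ∑ n, γ n * (x n - r n)^2) :
    ∀ r : Fin N → ℝ,
      jacobianMatrix g r * (Matrix.diagonal γ)⁻¹ =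
        (hessianMatrix f (g r) + Matrix.diagonal γ)⁻¹ ∧
      (jacobianMatrix g r * (Matrix.diagonal γ)⁻¹).PosDef ∧
      ((jacobianMatrix g r * (Matrix.diagonal γ)⁻¹)⁻¹ -
        (c • (1 : Matrix (Fin N) (Fin N) ℝ) + Matrix.diagonal γ)).PosSemidef ∧
      ((C • (1 : Matrix (Fin N) (Fin N) ℝ) + Matrix.diagonal γ) -
        (jacobianMatrix g r * (Matrix.diagonal γ)⁻¹)⁻¹).PosSemidef := by
  intro r
  have hpos : ∀ x, (hessianMatrix f x).PosSemidef := fun x => by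
    have h := (hhess x).1.add ((PosSemidef.one (n := Fin N) (R := ℝ)).smul hc.le)
    simpa using h
  have hgrad : ∀ s, gradMap f γ (g s) = s := fun s =>
    gradMap_of_isMin (hf.differentiable (by norm_num)) hγ fun x => by
      by_cases hx : x = g s
      · rw [hx]
      · exact (hg s x hx).le
  have hcont := continuous_of_gradMap_comp hf hpos hγ hgrad
  set M := hessianMatrix f (g r) + diagonal γ with hM
  have hMpos : M.PosDef := (PosDef.diagonal hγ).posSemidef_add (hpos (g r))
  have hMdet : IsUnit M.det := (Matrix.isUnit_iff_isUnit_det M).1 hMpos.isUnit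
  have hΓ : diagonal γ * diagonal (fun n => (γ n)⁻¹) = 1 := by
    rw [diagonal_mul_diagonal, ← diagonal_one]
    congr 1
    ext n
    exact mul_inv_cancel₀ (hγ n).ne'
  have hΓ' : diagonal (fun n => (γ n)⁻¹) * diagonal γ = 1 := mul_eq_one_comm.1 hΓ
  have hKK : (M⁻¹ * diagonal γ) * (diagonal (fun n => (γ n)⁻¹) * M) = 1 := by
    rw [Matrix.mul_assoc, ← Matrix.mul_assoc (diagonal γ), hΓ, Matrix.one_mul,
      Matrix.nonsing_inv_mul _ hMdet]
  have hKK' := mul_eq_one_comm.1 hKK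
  let e : (Fin N → ℝ) ≃L[ℝ] (Fin N → ℝ) := ContinuousLinearEquiv.equivOfInverse
    (LinearMap.toContinuousLinearMap (Matrix.toLin' (diagonal (fun n => (γ n)⁻¹) * M)))
    (LinearMap.toContinuousLinearMap (Matrix.toLin' (M⁻¹ * diagonal γ)))
    (fun v => by
      simp only [LinearMap.coe_toContinuousLinearMap', toLin'_apply, mulVec_mulVec, hKK,
        one_mulVec])
    (fun v => by
      simp only [LinearMap.coe_toContinuousLinearMap', toLin'_apply, mulVec_mulVec, hKK',
        one_mulVec])
  have hsymm : (hessianMatrix f (g r)).IsSymm := by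
    have := (hpos (g r)).isHermitian
    rwa [IsHermitian, conjTranspose_eq_transpose_of_trivial] at this
  have hF : HasFDerivAt (gradMap f γ) (e : (Fin N → ℝ) →L[ℝ] (Fin N → ℝ)) (g r) :=
    hasFDerivAt_gradMap hf hγ (g r) hsymm
  have hG := hF.of_local_left_inverse hcont.continuousAt (Filter.Eventually.of_forall hgrad)
  have hJ : jacobianMatrix g r = M⁻¹ * diagonal γ := by
    ext i j
    rw [jacobianMatrix, of_apply, ((hasFDerivAt_pi'.1 hG) i).fderiv]
    change ((M⁻¹ * diagonal γ) *ᵥ Pi.single j 1) i = _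
    simp
  have hQ : jacobianMatrix g r * (diagonal γ)⁻¹ = M⁻¹ := by
    rw [hJ, Matrix.inv_eq_right_inv hΓ, Matrix.mul_assoc, hΓ, Matrix.mul_one]
  rw [hQ, Matrix.nonsing_inv_nonsing_inv _ hMdet]
  refine ⟨rfl, hMpos.inv, ?_, ?_⟩
  · rw [hM, add_sub_add_right_eq_sub]
    exact (hhess (g r)).1
  · rw [hM, add_sub_add_right_eq_sub]
    exact (hhess (g r)).2
end

section
/- Let P be a symmetric positive semidefinite N×N matrix, γ ∈ ℝ^N with γ > 0 componentwise, and define G(γ) ∈ ℝ^N by G(γ)ᵢ := 1/[(P + Diag(γ))⁻¹]ᵢᵢ − γᵢ. Then G is differentiable on the positive orthant with partial derivatives ∂Gᵢ(γ)/∂γⱼ = Sᵢⱼ²/Sᵢᵢ² for i ≠ j and ∂Gᵢ(γ)/∂γᵢ = 0, where S := (P + Diag(γ))⁻¹. Consequently G is non-decreasing: if 0 < γ ≤ γ′ componentwise then G(γ) ≤ G(γ′) componentwise. -/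
/-! Each entry of `P + Diag γ` is affine in `γ`, and the matrix is positive definite for `γ > 0`, so
`S = (P + Diag γ)⁻¹` is differentiable with derivative `v ↦ -S Diag(v) S`. Its `(i, i)` entry in
the direction `eⱼ` is `-Sᵢⱼ Sⱼᵢ = -Sᵢⱼ²` by symmetry; the chain rule for `x ↦ x⁻¹` at `Sᵢᵢ > 0`
turns this into `Sᵢⱼ² / Sᵢᵢ²`, and subtracting `γᵢ` cancels exactly the diagonal term `j = i`.
All partial derivatives are thus nonnegative, and monotonicity follows from the mean value
theorem on the (convex) positive orthant. -/

open Matrix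

/-- The GEC second-order update map `G(γ)ᵢ = 1/[(P + Diag γ)⁻¹]ᵢᵢ − γᵢ`. -/
noncomputable def gecG {N : ℕ} (P : Matrix (Fin N) (Fin N) ℝ) (γ : Fin N → ℝ) :
    Fin N → ℝ :=
  fun i => (((P + Matrix.diagonal γ)⁻¹ : Matrix (Fin N) (Fin N) ℝ) i i)⁻¹ - γ i

lemma posDef_add_diagonal {N : ℕ} {P : Matrix (Fin N) (Fin N) ℝ} (hP : P.PosSemidef)
    {γ : Fin N → ℝ} (hγ : ∀ n, 0 < γ n) : (P + Matrix.diagonal γ).PosDef :=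
  Matrix.PosDef.posSemidef_add hP (Matrix.PosDef.diagonal hγ)

section Derivative

-- Differentiating inversion needs a normed algebra structure; the choice of norm is immaterial
-- in finite dimension, and the operator norm induces the entrywise topology.
attribute [local instance] Matrix.linftyOpNormedRing Matrix.linftyOpNormedAlgebra

/-- A diagonal entry `Sᵢᵢ` of `S = (P + Diag γ)⁻¹` is differentiable in `γ`; its derivative
`v ↦ -(S Diag(v) S)ᵢᵢ` is recorded through its values on the basis vectors. -/
lemma exists_hasFDerivAt_inv_apply {N : ℕ} {P : Matrix (Fin N) (Fin N) ℝ}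
    (hP : P.PosSemidef) {γ : Fin N → ℝ} (hγ : ∀ n, 0 < γ n) (i : Fin N) :
    ∃ L : (Fin N → ℝ) →L[ℝ] ℝ,
      HasFDerivAt (fun γ' => ((P + Matrix.diagonal γ')⁻¹ : Matrix (Fin N) (Fin N) ℝ) i i) L γ ∧
      ∀ j, L (Pi.single j 1) =
        -(((P + Matrix.diagonal γ)⁻¹ : Matrix (Fin N) (Fin N) ℝ) i j) ^ 2 := by
  have hpd := posDef_add_diagonal hP hγ
  obtain ⟨u, hu⟩ := hpd.isUnit
  let D : (Fin N → ℝ) →L[ℝ] Matrix (Fin N) (Fin N) ℝ :=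
    LinearMap.toContinuousLinearMap (Matrix.diagonalLinearMap (Fin N) ℝ ℝ)
  let E : Matrix (Fin N) (Fin N) ℝ →L[ℝ] ℝ :=
    LinearMap.toContinuousLinearMap (Matrix.entryLinearMap ℝ ℝ i i)
  have hD : HasFDerivAt (fun γ' => P + Matrix.diagonal γ') D γ := D.hasFDerivAt.const_add P
  have hinv := hasFDerivAt_ringInverse (𝕜 := ℝ) u
  rw [hu] at hinv
  have hE := E.hasFDerivAt.comp γ (hinv.comp γ hD)
  refine ⟨_, hE.congr_of_eventuallyEq (Filter.Eventually.of_forall fun γ' => ?_), fun j => ?_⟩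
  · simp [E, Matrix.nonsing_inv_eq_ringInverse]
  · have hS : ((u⁻¹ : (Matrix (Fin N) (Fin N) ℝ)ˣ) : Matrix (Fin N) (Fin N) ℝ)
        = (P + Matrix.diagonal γ)⁻¹ := by
      rw [← hu, Matrix.coe_units_inv]
    have hsymm : (P + Matrix.diagonal γ)⁻¹ j i = (P + Matrix.diagonal γ)⁻¹ i j := by
      simpa using hpd.inv.isHermitian.apply i j
    let T : Matrix (Fin N) (Fin N) ℝ := (u⁻¹ : (Matrix (Fin N) (Fin N) ℝ)ˣ)
    let M : Matrix (Fin N) (Fin N) ℝ := T * Matrix.diagonal (Pi.single j 1) * T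
    -- The composite derivative unfolds definitionally to this matrix entry.
    change (-M) i i = _
    simp only [M, T]
    rw [hS, Matrix.neg_apply, Matrix.mul_apply]
    simp [Matrix.mul_diagonal, Pi.single_apply, hsymm, sq]

end Derivative

lemma gecG_partial {N : ℕ} {P : Matrix (Fin N) (Fin N) ℝ} (hP : P.PosSemidef)
    {γ : Fin N → ℝ} (hγ : ∀ n, 0 < γ n) (i : Fin N) :
    DifferentiableAt ℝ (fun γ' => gecG P γ' i) γ ∧
    ∀ j, fderiv ℝ (fun γ' => gecG P γ' i) γ (Pi.single j 1) =
      if i = j then 0 else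
        (((P + Matrix.diagonal γ)⁻¹ : Matrix (Fin N) (Fin N) ℝ) i j) ^ 2 /
        (((P + Matrix.diagonal γ)⁻¹ : Matrix (Fin N) (Fin N) ℝ) i i) ^ 2 := by
  obtain ⟨L, hL, hLj⟩ := exists_hasFDerivAt_inv_apply hP hγ i
  have hpos : 0 < ((P + Matrix.diagonal γ)⁻¹ : Matrix (Fin N) (Fin N) ℝ) i i :=
    (posDef_add_diagonal hP hγ).inv.diag_pos
  have hG : HasFDerivAt (fun γ' => gecG P γ' i) _ γ :=
    ((hasDerivAt_inv hpos.ne').comp_hasFDerivAt γ hL).sub (hasFDerivAt_apply i γ)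
  refine ⟨hG.differentiableAt, fun j => ?_⟩
  rw [hG.fderiv]
  simp only [_root_.sub_apply, _root_.smul_apply, hLj,
    ContinuousLinearMap.proj_apply, smul_eq_mul, Pi.single_apply]
  split_ifs with h
  · subst h
    field_simp
    ring
  · field_simp
    ring

/-- **Monotonicity of the GEC second-order update map (property (ii) in the
proof of Theorem 5(b)).**  Let `P` be symmetric positive semidefinite.  On
the positive orthant, `G` is differentiable with partial derivatives
`∂Gᵢ/∂γⱼ = Sᵢⱼ²/Sᵢᵢ²` for `i ≠ j` and `∂Gᵢ/∂γᵢ = 0`, where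
`S := (P + Diag γ)⁻¹`; consequently `G` is non-decreasing: `0 < γ ≤ γ′`
componentwise implies `G(γ) ≤ G(γ′)` componentwise. -/
theorem gecG_monotone
    (N : ℕ)
    (P : Matrix (Fin N) (Fin N) ℝ) (hP : P.PosSemidef) :
    (∀ γ : Fin N → ℝ, (∀ n, 0 < γ n) → ∀ i j : Fin N,
      DifferentiableAt ℝ (fun γ' => gecG P γ' i) γ ∧
      fderiv ℝ (fun γ' => gecG P γ' i) γ (Pi.single j 1) =
        if i = j then 0 else
          (((P + Matrix.diagonal γ)⁻¹ : Matrix (Fin N) (Fin N) ℝ) i j)^2 /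
          (((P + Matrix.diagonal γ)⁻¹ : Matrix (Fin N) (Fin N) ℝ) i i)^2) ∧
    (∀ γ γ' : Fin N → ℝ, (∀ n, 0 < γ n) → (∀ n, γ n ≤ γ' n) →
      ∀ i, gecG P γ i ≤ gecG P γ' i) := by
  refine ⟨fun γ hγ i j => ⟨(gecG_partial hP hγ i).1, (gecG_partial hP hγ i).2 j⟩,
    fun γ γ' hγ hle i => ?_⟩
  have hconv : Convex ℝ (Set.univ.pi fun _ : Fin N => Set.Ioi (0 : ℝ)) :=
    convex_pi fun _ _ => convex_Ioi 0
  have hγ' : ∀ n, 0 < γ' n := fun n => (hγ n).trans_le (hle n)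
  obtain ⟨z, hz, hmvt⟩ := domain_mvt (f := fun γ' => gecG P γ' i)
    (s := Set.univ.pi fun _ : Fin N => Set.Ioi (0 : ℝ))
    (fun x hx => (gecG_partial hP (fun n => hx n trivial) i).1.hasFDerivAt.hasFDerivWithinAt)
    hconv (fun n _ => hγ n) (fun n _ => hγ' n)
  have hzpos : ∀ n, 0 < z n := fun n =>
    hconv.segment_subset (fun n _ => hγ n) (fun n _ => hγ' n) hz n trivial
  rw [← sub_nonneg, hmvt, pi_eq_sum_univ' (γ' - γ), map_sum]
  refine Finset.sum_nonneg fun j _ => ?_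
  rw [map_smul, smul_eq_mul, (gecG_partial hP hzpos i).2 j]
  refine mul_nonneg (sub_nonneg.2 (hle j)) ?_
  split_ifs <;> positivity
end
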